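/- Let G be a finite directed graph with nonnegative edge weights and with a linear order on its nodes, and suppose that for every ordered pair of nodes (s, t) with t reachable from s, all shortest walks from s to t have the same (finite) number of edges. Fix a source node s, and for each node t reachable from s let λ(t) denote the lexicographically smallest shortest walk from s to t, which is well-defined and unique. Then for every node t reachable from s and every prefix ρ of λ(t) ending at a node u, it holds that ρ = λ(u). In particular, for every reachable t ≠ s, the last edge of λ(t) determines a unique predecessor pred(t), and the set of edges {(pred(t), t) : t ≠ s reachable from s} forms a tree rooted at s whose root-to-t path is λ(t) for every reachable t. -/

import Mathlib

/-- `IsWalk E l s t`: the nonempty list `l` is the node sequence of a walk from `s` to `t`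
in the directed graph with edge relation `E`. -/
def IsWalk {V : Type*} (E : V → V → Prop) (l : List V) (s t : V) : Prop :=
  l ≠ [] ∧ l.head? = some s ∧ l.getLast? = some t ∧ l.Chain' E

/-- The length (total weight) of a walk with node sequence `l` under edge weights `w`. -/
def walkLen {V : Type*} (w : V → V → ℝ) (l : List V) : ℝ :=
  ((l.zip l.tail).map fun e => w e.1 e.2).sum

/-- `l` is a shortest walk from `s` to `t` under weights `w`. -/
def IsShortestWalk {V : Type*} (E : V → V → Prop) (w : V → V → ℝ) (s t : V) (l : List V) :
    Prop :=
  IsWalk E l s t ∧ ∀ l', IsWalk E l' s t → walkLen w l ≤ walkLen w l'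

/-!
Let `l ++ σ` be the lexicographically smallest shortest walk from `s` to `t`, where `l` ends at
`u`. Then `l` is itself shortest and can be exchanged for any other shortest walk from `s` to `u`
without changing the total length. If such a walk `l'` were lexicographically smaller than `l`,
then minimality of `l ++ σ` against `l' ++ σ` would leave only the case `l = l' ++ r` with `r ≠ []`
and `r ++ σ ≤ σ`. Then `r` lists the nodes after `u` of a closed walk of weight zero, which may be
traversed twice, and minimality against `l' ++ r ++ (r ++ σ)` gives `σ ≤ r ++ σ`. Hence
`r ++ σ = σ`, which is absurd.
-/

section LexicographicOrder

variable {α : Type*} [LinearOrder α]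

theorem append_left_strictMono (l : List α) : StrictMono (l ++ ·) :=
  fun _ _ h => List.append_left_lt h

theorem isPrefix_of_lt_of_append_le_append {a b σ : List α} (hlt : a < b)
    (hle : b ++ σ ≤ a ++ σ) : a <+: b := by
  replace hlt : List.Lex (· < ·) a b := hlt
  induction hlt with
  | nil => exact List.nil_prefix
  | @cons x a b _ ih =>
    exact (List.prefix_cons_inj x).2 (ih ((append_left_strictMono [x]).le_iff_le.1 hle))
  | rel hxy => exact absurd (List.Lex.rel hxy) hle.not_gt

end LexicographicOrder

section Walks

variable {V : Type*} {E : V → V → Prop} {w : V → V → ℝ} {s t u : V} {l l' σ : List V}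

theorem isWalk_iff :
    IsWalk E l s t ↔ l ≠ [] ∧ l.head? = some s ∧ l.getLast? = some t ∧ l.IsChain E :=
  Iff.rfl

theorem IsWalk.head?_eq (h : IsWalk E l s t) : l.head? = some s := h.2.1

theorem IsWalk.getLast?_eq (h : IsWalk E l s t) : l.getLast? = some t := h.2.2.1

theorem isWalk_singleton (s : V) : IsWalk E [s] s s :=
  ⟨List.cons_ne_nil s [], rfl, rfl, List.isChain_singleton s⟩

theorem isWalk_append_iff (hl : l.getLast? = some u) :
    IsWalk E (l ++ σ) s t ↔ IsWalk E l s u ∧ IsWalk E (u :: σ) u t := by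
  obtain ⟨p, rfl⟩ := List.getLast?_eq_some_iff.1 hl
  have hchain : (p ++ u :: σ).IsChain E ↔ (p ++ [u]).IsChain E ∧ (u :: σ).IsChain E :=
    List.isChain_split
  have hhead : (p ++ u :: σ).head? = (p ++ [u]).head? := by
    simp only [List.head?_append, List.head?_cons]
  have hlast : (p ++ u :: σ).getLast? = (u :: σ).getLast? := by
    simp [List.getLast?_cons]
  rw [List.append_assoc, List.singleton_append]
  simp only [isWalk_iff, hchain, hhead, hlast, List.head?_cons, hl]
  simp only [ne_eq, List.append_eq_nil_iff, List.cons_ne_nil, and_false, not_false_eq_true,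
    true_and]
  tauto

theorem walkLen_cons_cons (w : V → V → ℝ) (a b : V) (l : List V) :
    walkLen w (a :: b :: l) = w a b + walkLen w (b :: l) := by
  simp [walkLen]

theorem walkLen_append (w : V → V → ℝ) (σ : List V) (hl : l.getLast? = some u) :
    walkLen w (l ++ σ) = walkLen w l + walkLen w (u :: σ) := by
  induction l with
  | nil => simp at hl
  | cons a l ih =>
    cases l with
    | nil =>
      obtain rfl : a = u := by simpa using hl
      simp [walkLen]
    | cons b l =>
      have hsplit : walkLen w (b :: (l ++ σ)) = walkLen w (b :: l) + walkLen w (u :: σ) :=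
        ih (by simpa only [List.getLast?_cons_cons] using hl)
      simp only [List.cons_append, walkLen_cons_cons, hsplit, add_assoc]

theorem IsShortestWalk.of_append (h : IsShortestWalk E w s t (l ++ σ))
    (hl : l.getLast? = some u) : IsShortestWalk E w s u l := by
  obtain ⟨hwalk, hmin⟩ := h
  obtain ⟨hwalk_l, hwalk_σ⟩ := (isWalk_append_iff hl).1 hwalk
  refine ⟨hwalk_l, fun l' hl' => ?_⟩
  have hlast : l'.getLast? = some u := hl'.getLast?_eq
  have hle := hmin _ ((isWalk_append_iff hlast).2 ⟨hl', hwalk_σ⟩)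
  rwa [walkLen_append w σ hl, walkLen_append w σ hlast, add_le_add_iff_right] at hle

theorem IsShortestWalk.walkLen_eq (hl : IsShortestWalk E w s t l)
    (hl' : IsShortestWalk E w s t l') : walkLen w l = walkLen w l' :=
  le_antisymm (hl.2 l' hl'.1) (hl'.2 l hl.1)

theorem IsShortestWalk.replace_prefix (h : IsShortestWalk E w s t (l ++ σ))
    (hl : IsShortestWalk E w s u l) (hl' : IsShortestWalk E w s u l') :
    IsShortestWalk E w s t (l' ++ σ) := by
  have hlast : l.getLast? = some u := hl.1.getLast?_eq
  have hlast' : l'.getLast? = some u := hl'.1.getLast?_eq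
  have hlen : walkLen w (l' ++ σ) = walkLen w (l ++ σ) := by
    rw [walkLen_append w σ hlast, walkLen_append w σ hlast', hl.walkLen_eq hl']
  have hwalk_σ := ((isWalk_append_iff hlast).1 h.1).2
  exact ⟨(isWalk_append_iff hlast').2 ⟨hl'.1, hwalk_σ⟩, fun m hm => hlen.trans_le (h.2 m hm)⟩

end Walks

section LexShortestWalks

variable {V : Type*} [LinearOrder V] {E : V → V → Prop} {w : V → V → ℝ} {s t u : V}
  {l l' σ ρ : List V}

/-- `l` is the lexicographically smallest shortest walk from `s` to `t`, written `λ(t)` when the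
source `s` is fixed. The order on `List V` is Mathlib's lexicographic order, in which a proper
prefix is smaller. -/
def IsLexShortestWalk (E : V → V → Prop) (w : V → V → ℝ) (s t : V) (l : List V) : Prop :=
  IsLeast {m | IsShortestWalk E w s t m} l

theorem isLexShortestWalk_iff :
    IsLexShortestWalk E w s t l ↔ IsShortestWalk E w s t l ∧
      ∀ m, IsShortestWalk E w s t m → l = m ∨ List.Lex (· < ·) l m :=
  and_congr_right' (forall₂_congr fun _ _ => le_iff_eq_or_lt)

namespace IsLexShortestWalk

theorem isShortestWalk (h : IsLexShortestWalk E w s t l) : IsShortestWalk E w s t l := h.1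

theorem isWalk (h : IsLexShortestWalk E w s t l) : IsWalk E l s t := h.isShortestWalk.1

theorem le (h : IsLexShortestWalk E w s t l) (hl' : IsShortestWalk E w s t l') : l ≤ l' :=
  h.2 hl'

theorem unique (h : IsLexShortestWalk E w s t l) (h' : IsLexShortestWalk E w s t l') : l = l' :=
  IsLeast.unique h h'

theorem of_append (h : IsLexShortestWalk E w s t (l ++ σ)) (hu : l.getLast? = some u) :
    IsLexShortestWalk E w s u l := by
  have hl : IsShortestWalk E w s u l := h.isShortestWalk.of_append hu
  refine ⟨hl, fun l' hl' => not_lt.1 fun hlt => ?_⟩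
  have hle : l ++ σ ≤ l' ++ σ := h.le (h.isShortestWalk.replace_prefix hl hl')
  obtain ⟨r, rfl⟩ := isPrefix_of_lt_of_append_le_append hlt hle
  rw [List.append_assoc] at h hle
  have hle_twice : l' ++ (r ++ σ) ≤ (l' ++ r) ++ (r ++ σ) :=
    h.le (h.isShortestWalk.replace_prefix hl' hl)
  rw [List.append_assoc] at hle_twice
  have hrσ : r ++ σ ≤ σ := (append_left_strictMono l').le_iff_le.1 hle
  have hσr : σ ≤ r ++ σ :=
    (append_left_strictMono r).le_iff_le.1 ((append_left_strictMono l').le_iff_le.1 hle_twice)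
  obtain rfl : r = [] := List.append_left_eq_self.1 (hrσ.antisymm hσr)
  exact hlt.ne (List.append_nil l').symm

theorem of_isPrefix (h : IsLexShortestWalk E w s t l) (hρ : ρ <+: l)
    (hu : ρ.getLast? = some u) : IsLexShortestWalk E w s u ρ := by
  obtain ⟨σ, rfl⟩ := hρ
  exact h.of_append hu

theorem eq_singleton (h : IsLexShortestWalk E w s s l) : l = [s] :=
  h.unique (h.of_isPrefix (List.singleton_prefix_iff_head?_eq_some.2 h.isWalk.head?_eq) rfl)

theorem exists_eq_concat (h : IsLexShortestWalk E w s t l) (hts : t ≠ s) :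
    ∃ u p, IsLexShortestWalk E w s u p ∧ l = p ++ [t] := by
  obtain ⟨p, rfl⟩ := List.getLast?_eq_some_iff.1 h.isWalk.getLast?_eq
  have hp : p ≠ [] := by
    rintro rfl
    exact hts (Option.some.inj h.isWalk.head?_eq)
  exact ⟨p.getLast hp, p, h.of_append (List.getLast?_eq_some_getLast hp), rfl⟩

end IsLexShortestWalk

end LexShortestWalks

theorem stmt12_general {V : Type*} [LinearOrder V] (E : V → V → Prop) (w : V → V → ℝ)
    (s : V) (lam : V → List V)
    (hlam : ∀ t, (∃ l, IsWalk E l s t) → IsLexShortestWalk E w s t (lam t)) :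
    (∀ t, (∃ l, IsWalk E l s t) → ∀ l, IsLexShortestWalk E w s t l → l = lam t) ∧
    (∀ t, (∃ l, IsWalk E l s t) → ∀ ρ u, ρ <+: lam t → ρ.getLast? = some u → ρ = lam u) ∧
    lam s = [s] ∧
    ∃ pred : V → V, ∀ t, (∃ l, IsWalk E l s t) → t ≠ s → lam t = lam (pred t) ++ [t] := by
  have eq_lam : ∀ {u l}, IsLexShortestWalk E w s u l → l = lam u :=
    fun h => h.unique (hlam _ ⟨_, h.isWalk⟩)
  have exists_pred : ∀ t, (∃ l, IsWalk E l s t) → t ≠ s → ∃ u, lam t = lam u ++ [t] := by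
    intro t ht hts
    obtain ⟨u, p, hp, hconcat⟩ := (hlam t ht).exists_eq_concat hts
    exact ⟨u, eq_lam hp ▸ hconcat⟩
  have : Nonempty V := ⟨s⟩
  choose! pred hpred using exists_pred
  exact ⟨fun _ _ _ h => eq_lam h, fun t ht _ _ hρ hu => eq_lam ((hlam t ht).of_isPrefix hρ hu),
    (hlam s ⟨[s], isWalk_singleton s⟩).eq_singleton, pred, hpred⟩

/-- Suppose all shortest walks between any reachable pair have the same
number of edges, and for each `t` reachable from `s` let `lam t` be the lexicographically
smallest shortest walk from `s` to `t` (given by hypothesis; its uniqueness is part of the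
conclusion).  Then every prefix of `lam t` ending at a node `u` equals `lam u`; in
particular `lam s = [s]` and there is a predecessor function `pred` with
`lam t = lam (pred t) ++ [t]` for every reachable `t ≠ s`, so the predecessor edges form a
tree rooted at `s` whose root-to-`t` path is `lam t`. -/
theorem stmt12 {V : Type} [Fintype V] [LinearOrder V]
    (E : V → V → Prop) (w : V → V → ℝ) (hw : ∀ u z, E u z → 0 ≤ w u z)
    (hsame : ∀ (a b : V) (l₁ l₂ : List V),
      IsShortestWalk E w a b l₁ → IsShortestWalk E w a b l₂ → l₁.length = l₂.length)
    (s : V) (lam : V → List V)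
    (hlam : ∀ t : V, (∃ l, IsWalk E l s t) →
      IsShortestWalk E w s t (lam t) ∧
      ∀ l, IsShortestWalk E w s t l → lam t = l ∨ List.Lex (· < ·) (lam t) l) :
    -- `lam t` is the unique lexicographically smallest shortest walk
    (∀ t : V, (∃ l, IsWalk E l s t) →
      ∀ l, (IsShortestWalk E w s t l ∧
          ∀ l', IsShortestWalk E w s t l' → l = l' ∨ List.Lex (· < ·) l l') →
        l = lam t) ∧
    -- every prefix of `lam t` ending at `u` equals `lam u`
    (∀ t : V, (∃ l, IsWalk E l s t) →
      ∀ (ρ : List V) (u : V), ρ <+: lam t → ρ.getLast? = some u → ρ = lam u) ∧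
    -- the predecessor edges form a tree rooted at `s` whose root-to-`t` path is `lam t`
    (lam s = [s]) ∧
    (∃ pred : V → V, ∀ t : V, (∃ l, IsWalk E l s t) → t ≠ s →
      lam t = lam (pred t) ++ [t]) := by
  simp only [← isLexShortestWalk_iff] at hlam ⊢
  exact stmt12_general E w s lam hlam
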